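/- arXiv:math/0504469 — 2 statements merged into one kernel-verified Lean document; each statement's English description precedes it below -/
import Mathlib

section
/- The map i from the group Q of block matrices [[p,0,s],[0,R,0],[0,0,q]] (blocks 1, n, 1; |p q det R| = 1) to GL(2n+2,ℝ), sending such a matrix to the block matrix (blocks of sizes 1, 1, n, n) [[sgn(q/p)·√|p/q|, sgn(q/p)·(s/p)·√|p/q|, 0, 0], [0, √|q/p|, 0, 0], [0, 0, q^{-1}√|q/p|·R, 0], [0, 0, 0, p·√|q/p|·(R^{-1})^T]], is an injective group homomorphism. -/
/-- Index type for block decomposition of size 1, n, 1 (source side). -/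
abbrev Idx (n : ℕ) := Unit ⊕ Fin n ⊕ Unit

/-- Index type for block decomposition of sizes 1, 1, n, n (target side). -/
abbrev Jdx (n : ℕ) := Unit ⊕ Unit ⊕ Fin n ⊕ Fin n

/-- The linear map `α : sl(n+2,ℝ) → sl(2n+2,ℝ)` of the paper, written blockwise:
for `A = [[a,u,d],[x,B,v],[z,y,c]]` (blocks 1, n, 1),
`α(A) = [[(a−c)/2, d, u/2, vᵀ/2], [z, (c−a)/2, y/2, −xᵀ/2],
[x, v, B−((a+c)/2)·id, 0], [yᵀ, −uᵀ, 0, −Bᵀ+((a+c)/2)·id]]` (blocks 1, 1, n, n). -/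
noncomputable def alphaMap {n : ℕ} (A : Matrix (Idx n) (Idx n) ℝ) : Matrix (Jdx n) (Jdx n) ℝ :=
  Matrix.of fun i j =>
    match i, j with
    | Sum.inl _, Sum.inl _ =>
        (A (Sum.inl ()) (Sum.inl ()) - A (Sum.inr (Sum.inr ())) (Sum.inr (Sum.inr ()))) / 2
    | Sum.inl _, Sum.inr (Sum.inl _) => A (Sum.inl ()) (Sum.inr (Sum.inr ()))
    | Sum.inl _, Sum.inr (Sum.inr (Sum.inl k)) => A (Sum.inl ()) (Sum.inr (Sum.inl k)) / 2
    | Sum.inl _, Sum.inr (Sum.inr (Sum.inr k)) => A (Sum.inr (Sum.inl k)) (Sum.inr (Sum.inr ())) / 2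
    | Sum.inr (Sum.inl _), Sum.inl _ => A (Sum.inr (Sum.inr ())) (Sum.inl ())
    | Sum.inr (Sum.inl _), Sum.inr (Sum.inl _) =>
        (A (Sum.inr (Sum.inr ())) (Sum.inr (Sum.inr ())) - A (Sum.inl ()) (Sum.inl ())) / 2
    | Sum.inr (Sum.inl _), Sum.inr (Sum.inr (Sum.inl k)) =>
        A (Sum.inr (Sum.inr ())) (Sum.inr (Sum.inl k)) / 2
    | Sum.inr (Sum.inl _), Sum.inr (Sum.inr (Sum.inr k)) =>
        -(A (Sum.inr (Sum.inl k)) (Sum.inl ())) / 2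
    | Sum.inr (Sum.inr (Sum.inl k)), Sum.inl _ => A (Sum.inr (Sum.inl k)) (Sum.inl ())
    | Sum.inr (Sum.inr (Sum.inl k)), Sum.inr (Sum.inl _) =>
        A (Sum.inr (Sum.inl k)) (Sum.inr (Sum.inr ()))
    | Sum.inr (Sum.inr (Sum.inl k)), Sum.inr (Sum.inr (Sum.inl l)) =>
        A (Sum.inr (Sum.inl k)) (Sum.inr (Sum.inl l)) -
          (if k = l then (A (Sum.inl ()) (Sum.inl ()) +
            A (Sum.inr (Sum.inr ())) (Sum.inr (Sum.inr ()))) / 2 else 0)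
    | Sum.inr (Sum.inr (Sum.inl _)), Sum.inr (Sum.inr (Sum.inr _)) => 0
    | Sum.inr (Sum.inr (Sum.inr k)), Sum.inl _ => A (Sum.inr (Sum.inr ())) (Sum.inr (Sum.inl k))
    | Sum.inr (Sum.inr (Sum.inr k)), Sum.inr (Sum.inl _) => -(A (Sum.inl ()) (Sum.inr (Sum.inl k)))
    | Sum.inr (Sum.inr (Sum.inr _)), Sum.inr (Sum.inr (Sum.inl _)) => 0
    | Sum.inr (Sum.inr (Sum.inr k)), Sum.inr (Sum.inr (Sum.inr l)) =>
        -(A (Sum.inr (Sum.inl l)) (Sum.inr (Sum.inl k))) +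
          (if k = l then (A (Sum.inl ()) (Sum.inl ()) +
            A (Sum.inr (Sum.inr ())) (Sum.inr (Sum.inr ()))) / 2 else 0)

/-- The matrix `[[p,0,s],[0,R,0],[0,0,q]]` representing an element of `Q`. -/
noncomputable def qMat {n : ℕ} (p s q : ℝ) (R : Matrix (Fin n) (Fin n) ℝ) : Matrix (Idx n) (Idx n) ℝ :=
  Matrix.of fun i j =>
    match i, j with
    | Sum.inl _, Sum.inl _ => p
    | Sum.inl _, Sum.inr (Sum.inr _) => s
    | Sum.inr (Sum.inl k), Sum.inr (Sum.inl l) => R k l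
    | Sum.inr (Sum.inr _), Sum.inr (Sum.inr _) => q
    | _, _ => 0

/-- The map `i : Q → P̃` of the paper on representative matrices. -/
noncomputable def iMap {n : ℕ} (p s q : ℝ) (R : Matrix (Fin n) (Fin n) ℝ) :
    Matrix (Jdx n) (Jdx n) ℝ :=
  Matrix.of fun i j =>
    match i, j with
    | Sum.inl _, Sum.inl _ => Real.sign (q / p) * Real.sqrt |p / q|
    | Sum.inl _, Sum.inr (Sum.inl _) => Real.sign (q / p) * (s / p) * Real.sqrt |p / q|
    | Sum.inr (Sum.inl _), Sum.inr (Sum.inl _) => Real.sqrt |q / p|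
    | Sum.inr (Sum.inr (Sum.inl k)), Sum.inr (Sum.inr (Sum.inl l)) =>
        q⁻¹ * Real.sqrt |q / p| * R k l
    | Sum.inr (Sum.inr (Sum.inr k)), Sum.inr (Sum.inr (Sum.inr l)) =>
        p * Real.sqrt |q / p| * R⁻¹ l k
    | _, _ => 0




theorem sqrt_abs_div_mul (a b c d : ℝ) :
    Real.sqrt |a * b / (c * d)| = Real.sqrt |a / c| * Real.sqrt |b / d| := by
  rw [mul_div_mul_comm, abs_mul, Real.sqrt_mul (abs_nonneg _)]

theorem sign_div_mul (a b c d : ℝ) :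
    Real.sign (a * b / (c * d)) = Real.sign (a / c) * Real.sign (b / d) := by
  rw [mul_div_mul_comm]
  generalize a / c = x
  generalize b / d = y
  rcases lt_trichotomy x 0 with h | h | h <;> rcases lt_trichotomy y 0 with k | k | k
  · rw [Real.sign_of_neg h, Real.sign_of_neg k, Real.sign_of_pos (mul_pos_of_neg_of_neg h k)]
    norm_num
  · simp [k]
  · rw [Real.sign_of_neg h, Real.sign_of_pos k, Real.sign_of_neg (mul_neg_of_neg_of_pos h k)]
    norm_num
  · simp [h]
  · simp [h]
  · simp [h]
  · rw [Real.sign_of_pos h, Real.sign_of_neg k, Real.sign_of_neg (mul_neg_of_pos_of_neg h k)]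
    norm_num
  · simp [k]
  · rw [Real.sign_of_pos h, Real.sign_of_pos k, Real.sign_of_pos (mul_pos h k)]
    norm_num

theorem sqrt_abs_flip (p q : ℝ) (hp : p ≠ 0) (hq : q ≠ 0) :
    Real.sign (q / p) * (q / p) * Real.sqrt |p / q| = Real.sqrt |q / p| := by
  have h1 : |p / q| = |q / p|⁻¹ := by rw [← abs_inv, inv_div]
  have h0 : 0 < |q / p| := abs_pos.mpr (div_ne_zero hq hp)
  have h2 : Real.sign (q / p) * (q / p) = |q / p| := by
    rcases lt_or_gt_of_ne (div_ne_zero hq hp) with h | h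
    · rw [Real.sign_of_neg h, abs_of_neg h]; ring
    · rw [Real.sign_of_pos h, abs_of_pos h]; ring
  have h3 : 0 < Real.sqrt |q / p| := Real.sqrt_pos.mpr h0
  rw [h2, h1, Real.sqrt_inv]
  have h4 := Real.mul_self_sqrt h0.le
  field_simp
  nlinarith

theorem iMap_mul (n : ℕ) (p s q p' s' q' : ℝ)
    (R R' : Matrix (Fin n) (Fin n) ℝ)
    (hp : p ≠ 0) (hp' : p' ≠ 0) (hq' : q' ≠ 0) :
    iMap (p * p') (p * s' + s * q') (q * q') (R * R') =
      iMap p s q R * iMap p' s' q' R' := by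
  ext i j
  rw [Matrix.mul_apply]
  simp only [Fintype.sum_sum_type, Finset.univ_unique, Finset.sum_singleton]
  rcases i with i | i | i | i <;> rcases j with j | j | j | j <;> simp [iMap]
  · rw [sqrt_abs_div_mul, sign_div_mul]; ring
  · rw [sqrt_abs_div_mul, sign_div_mul, ← sqrt_abs_flip p' q' hp' hq']
    field_simp
  · rw [sqrt_abs_div_mul]
  · rw [sqrt_abs_div_mul, Matrix.mul_apply, Finset.mul_sum]
    refine Finset.sum_congr rfl fun k _ => ?_
    ring
  · rw [sqrt_abs_div_mul, Matrix.mul_inv_rev, Matrix.mul_apply, Finset.mul_sum]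
    refine Finset.sum_congr rfl fun k _ => ?_
    ring

theorem iMap_inj (n : ℕ) (p s q p' s' q' : ℝ)
    (R R' : Matrix (Fin n) (Fin n) ℝ)
    (hp : p ≠ 0) (hq : q ≠ 0) (hp' : p' ≠ 0) (hq' : q' ≠ 0)
    (hdet : |p * q * R.det| = 1) (hdet' : |p' * q' * R'.det| = 1)
    (h : iMap p s q R = iMap p' s' q' R') :
    qMat p s q R = qMat p' s' q' R' ∨ qMat p s q R = -qMat p' s' q' R' := by
  have h00 : Real.sign (q / p) * Real.sqrt |p / q| =
      Real.sign (q' / p') * Real.sqrt |p' / q'| :=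
    congrFun (congrFun h (Sum.inl ())) (Sum.inl ())
  have h01 : Real.sign (q / p) * (s / p) * Real.sqrt |p / q| =
      Real.sign (q' / p') * (s' / p') * Real.sqrt |p' / q'| :=
    congrFun (congrFun h (Sum.inl ())) (Sum.inr (Sum.inl ()))
  have h11 : Real.sqrt |q / p| = Real.sqrt |q' / p'| :=
    congrFun (congrFun h (Sum.inr (Sum.inl ()))) (Sum.inr (Sum.inl ()))
  have hRR : ∀ k l, q⁻¹ * Real.sqrt |q / p| * R k l = q'⁻¹ * Real.sqrt |q' / p'| * R' k l :=
    fun k l => congrFun (congrFun h (Sum.inr (Sum.inr (Sum.inl k)))) (Sum.inr (Sum.inr (Sum.inl l)))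
  have e1 := sqrt_abs_flip p q hp hq
  have e2 := sqrt_abs_flip p' q' hp' hq'
  have hb : 0 < Real.sqrt |q' / p'| := Real.sqrt_pos.mpr (abs_pos.mpr (div_ne_zero hq' hp'))
  have hx : Real.sign (q' / p') * Real.sqrt |p' / q'| ≠ 0 := by
    intro h0
    have : Real.sqrt |q' / p'| = 0 := by rw [← e2, mul_right_comm, h0, zero_mul]
    exact hb.ne' this
  have hqp : q / p = q' / p' := by
    apply mul_left_cancel₀ hx
    rw [mul_right_comm] at e1 e2
    rw [e2, ← h11, ← e1, h00]
  have hsp : s / p = s' / p' := by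
    apply mul_left_cancel₀ hx
    rw [mul_right_comm, mul_right_comm (Real.sign (q' / p'))] at h01
    rw [← h01, h00]
  have hR2 : ∀ k l, R k l = (p / p') * R' k l := by
    intro k l
    have h3 := hRR k l
    rw [h11] at h3
    have h4 : q⁻¹ * R k l = q'⁻¹ * R' k l := by
      apply mul_left_cancel₀ hb.ne'
      linarith
    have h5 : q = p * (q' / p') := by rw [← hqp]; field_simp
    have h6 : R k l = q * (q'⁻¹ * R' k l) := by rw [← h4]; field_simp
    rw [h6, h5]; field_simp
  obtain ⟨c, hc⟩ : ∃ c, c = p / p' := ⟨_, rfl⟩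
  have cp : p = c * p' := by rw [hc]; field_simp
  have cq : q = c * q' := by
    rw [hc]; field_simp at hqp ⊢; linarith
  have cs : s = c * s' := by
    rw [hc]; field_simp at hsp ⊢; linarith
  have cR : R = c • R' := by
    ext k l
    rw [hR2, ← hc]; rfl
  have hcabs : |c| = 1 := by
    rw [cp, cq, cR, Matrix.det_smul, Fintype.card_fin] at hdet
    have h7 : c * p' * (c * q') * (c ^ n * R'.det) = c ^ (n + 2) * (p' * q' * R'.det) := by ring
    rw [h7, abs_mul, hdet', mul_one, abs_pow] at hdet
    exact (pow_eq_one_iff_of_nonneg (abs_nonneg c) (by omega)).mp hdet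
  have key : qMat p s q R = c • qMat p' s' q' R' := by
    ext i j
    rcases i with i | i | i <;> rcases j with j | j | j <;> simp [qMat, cp, cs, cq, cR]
  rcases (abs_eq (zero_le_one)).mp hcabs with h1 | h1
  · left; rw [key, h1, one_smul]
  · right; rw [key, h1, neg_one_smul]

/-- the map `i : Q → PGL(2n+2,ℝ)` is an injective group homomorphism:
on representatives it is multiplicative, and two elements of `Q` with the same image
agree up to sign (i.e. represent the same element of `PGL(n+2,ℝ)`). -/
theorem iMap_injective_group_hom (n : ℕ) (p s q p' s' q' : ℝ)
    (R R' : Matrix (Fin n) (Fin n) ℝ)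
    (hp : p ≠ 0) (hq : q ≠ 0) (hp' : p' ≠ 0) (hq' : q' ≠ 0)
    (hR : IsUnit R.det) (hR' : IsUnit R'.det)
    (hdet : |p * q * R.det| = 1) (hdet' : |p' * q' * R'.det| = 1) :
    iMap (p * p') (p * s' + s * q') (q * q') (R * R') =
      iMap p s q R * iMap p' s' q' R' ∧
    (iMap p s q R = iMap p' s' q' R' →
      qMat p s q R = qMat p' s' q' R' ∨ qMat p s q R = -qMat p' s' q' R') := by
  exact ⟨iMap_mul n p s q p' s' q' R R' hp hp' hq',
    iMap_inj n p s q p' s' q' R R' hp hq hp' hq' hdet hdet'⟩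
end

section
/- The pair (i, α) defined above satisfies the compatibility condition α ∘ Ad(g) = Ad(i(g)) ∘ α for all g ∈ Q, i.e. for every g ∈ Q and A ∈ sl(n+2,ℝ): α(g A g^{-1}) = i(g) α(A) i(g)^{-1}. -/
/-- General block matrix `[[a,b,0,0],[0,c,0,0],[0,0,S,0],[0,0,0,T]]`. -/
noncomputable def kMat {n : ℕ} (a b c : ℝ) (S T : Matrix (Fin n) (Fin n) ℝ) :
    Matrix (Jdx n) (Jdx n) ℝ :=
  Matrix.of fun i j =>
    match i, j with
    | Sum.inl _, Sum.inl _ => a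
    | Sum.inl _, Sum.inr (Sum.inl _) => b
    | Sum.inr (Sum.inl _), Sum.inr (Sum.inl _) => c
    | Sum.inr (Sum.inr (Sum.inl k)), Sum.inr (Sum.inr (Sum.inl l)) => S k l
    | Sum.inr (Sum.inr (Sum.inr k)), Sum.inr (Sum.inr (Sum.inr l)) => T k l
    | _, _ => 0

lemma qMat_mul {n : ℕ} (p s q p' s' q' : ℝ) (R R' : Matrix (Fin n) (Fin n) ℝ) :
    qMat p s q R * qMat p' s' q' R' = qMat (p * p') (p * s' + s * q') (q * q') (R * R') := by
  ext (i | i | i) (j | j | j) <;> simp [qMat, Matrix.mul_apply, Fintype.sum_sum_type]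

lemma qMat_one {n : ℕ} : qMat 1 0 1 (1 : Matrix (Fin n) (Fin n) ℝ) = 1 := by
  ext (i | i | i) (j | j | j) <;> simp [qMat, Matrix.one_apply]

lemma kMat_mul {n : ℕ} (a b c a' b' c' : ℝ) (S T S' T' : Matrix (Fin n) (Fin n) ℝ) :
    kMat a b c S T * kMat a' b' c' S' T' =
      kMat (a * a') (a * b' + b * c') (c * c') (S * S') (T * T') := by
  ext (i | i | i | i) (j | j | j | j) <;> simp [kMat, Matrix.mul_apply, Fintype.sum_sum_type]

lemma kMat_one {n : ℕ} : kMat 1 0 1 (1 : Matrix (Fin n) (Fin n) ℝ) 1 = 1 := by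
  ext (i | i | i | i) (j | j | j | j) <;> simp [kMat, Matrix.one_apply]

lemma sign_sqrt {p q : ℝ} (hp : p ≠ 0) (hq : q ≠ 0) :
    Real.sign (q / p) * Real.sqrt |p / q| = Real.sqrt |q / p| * (p / q) := by
  have h1 : p / q = (q / p)⁻¹ := by rw [inv_div]
  have hx : q / p ≠ 0 := div_ne_zero hq hp
  rw [h1]
  generalize q / p = x at hx
  rw [abs_inv, Real.sqrt_inv]
  have hs : Real.sqrt |x| ≠ 0 := (Real.sqrt_pos.2 (abs_pos.2 hx)).ne'
  have hss : Real.sqrt |x| * Real.sqrt |x| = |x| := Real.mul_self_sqrt (abs_nonneg x)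
  field_simp
  rw [sq, hss]
  rcases lt_or_gt_of_ne hx with h | h
  · rw [Real.sign_of_neg h, abs_of_neg h]; ring
  · rw [Real.sign_of_pos h, abs_of_pos h]; ring

lemma iMap_eq {n : ℕ} {p s q : ℝ} (R : Matrix (Fin n) (Fin n) ℝ) (hp : p ≠ 0) (hq : q ≠ 0) :
    iMap p s q R = Real.sqrt |q / p| •
      kMat (p / q) (s / q) 1 (q⁻¹ • R) (p • (R⁻¹).transpose) := by
  have h := sign_sqrt hp hq
  ext (i | i | i | i) (j | j | j | j) <;>
    simp only [iMap, kMat, Matrix.of_apply, Matrix.smul_apply, smul_eq_mul,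
      Matrix.transpose_apply, mul_zero, mul_one]
  · exact h
  · rw [mul_right_comm, h]; field_simp
  · ring
  · ring

lemma block_conj {n : ℕ} (R W : Matrix (Fin n) (Fin n) ℝ) (B : Fin n → Fin n → ℝ)
    (hRW : R * W = 1) (c : ℝ) {q : ℝ} (hq : q ≠ 0) (i j : Fin n) :
    (∑ x, (∑ y, R i y * B y x) * W x j - if i = j then c else 0) =
      ∑ x, (∑ y, q⁻¹ * R i y * (B y x - if y = x then c else 0)) * (q * W x j) := by
  have h : (if i = j then c else 0) = ∑ x, c * (R i x * W x j) := by
    rw [← Finset.mul_sum, ← Matrix.mul_apply, hRW, Matrix.one_apply]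
    simp
  rw [h, ← Finset.sum_sub_distrib]
  refine Finset.sum_congr rfl fun x _ => ?_
  have h2 : ∑ y, q⁻¹ * R i y * (B y x - if y = x then c else 0) =
      q⁻¹ * (∑ y, R i y * B y x - R i x * c) := by
    simp only [mul_assoc, ← Finset.mul_sum, mul_sub, Finset.sum_sub_distrib]
    simp
  rw [h2]
  field_simp

lemma block_conj_dual {n : ℕ} (R W : Matrix (Fin n) (Fin n) ℝ) (B : Fin n → Fin n → ℝ)
    (hRW : R * W = 1) (c : ℝ) {p : ℝ} (hp : p ≠ 0) (i j : Fin n) :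
    (-∑ x, (∑ y, R j y * B y x) * W x i + if i = j then c else 0) =
      ∑ x, (∑ y, p * W y i * (-B x y + if y = x then c else 0)) * (p⁻¹ * R j x) := by
  have h := block_conj R W B hRW c hp j i
  have e : (if i = j then c else 0) = if j = i then c else 0 := by simp only [eq_comm]
  rw [e, neg_add_eq_sub, ← neg_sub, h, ← Finset.sum_neg_distrib]
  simp only [Finset.sum_mul, ← Finset.sum_neg_distrib]
  rw [Finset.sum_comm]
  refine Finset.sum_congr rfl fun x _ => Finset.sum_congr rfl fun y _ => ?_
  by_cases hxy : x = y
  · subst hxy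
    simp only [if_true]
    ring
  · rw [if_neg hxy, if_neg (Ne.symm hxy)]
    ring

set_option maxHeartbeats 4000000 in
lemma alpha_conj {n : ℕ} {p s q : ℝ} (R W : Matrix (Fin n) (Fin n) ℝ) (hp : p ≠ 0) (hq : q ≠ 0)
    (hRW : R * W = 1) (A : Matrix (Idx n) (Idx n) ℝ) :
    alphaMap (qMat p s q R * A * qMat p⁻¹ (-s / (p * q)) q⁻¹ W) =
      kMat (p / q) (s / q) 1 (q⁻¹ • R) (p • W.transpose) * alphaMap A *
        kMat (q / p) (-s / p) 1 (q • W) (p⁻¹ • R.transpose) := by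
  ext (i | i | i | i) (j | j | j | j) <;>
    simp [alphaMap, kMat, qMat, Matrix.mul_apply, Fintype.sum_sum_type]
  · field_simp
    ring
  · field_simp
    ring
  · simp only [Finset.sum_div]
    refine Finset.sum_congr rfl fun x _ => ?_
    field_simp
  · simp only [Finset.sum_mul, Finset.sum_div, ← Finset.sum_add_distrib]
    refine Finset.sum_congr rfl fun x _ => ?_
    field_simp
    ring
  · field_simp
  · field_simp
    ring
  · simp only [Finset.sum_div]
    refine Finset.sum_congr rfl fun x _ => ?_
    ring
  · simp only [Finset.sum_mul, Finset.sum_div, ← Finset.sum_neg_distrib]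
    refine Finset.sum_congr rfl fun x _ => ?_
    ring
  · simp only [Finset.sum_mul]
    refine Finset.sum_congr rfl fun x _ => ?_
    field_simp
  · simp only [Finset.sum_mul, ← Finset.sum_add_distrib]
    refine Finset.sum_congr rfl fun x _ => ?_
    field_simp
  · rw [← block_conj R W (fun y x => A (Sum.inr (Sum.inl y)) (Sum.inr (Sum.inl x))) hRW _ hq]
    congr 2
    field_simp
    ring
  · simp only [Finset.sum_mul]
    refine Finset.sum_congr rfl fun x _ => ?_
    field_simp
  · simp only [Finset.sum_mul, ← Finset.sum_add_distrib, ← Finset.sum_neg_distrib]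
    refine Finset.sum_congr rfl fun x _ => ?_
    field_simp
    ring
  · rw [← block_conj_dual R W (fun y x => A (Sum.inr (Sum.inl y)) (Sum.inr (Sum.inl x))) hRW _ hp]
    congr 2
    field_simp
    ring

/-- the pair `(i, α)` satisfies `α ∘ Ad(g) = Ad(i(g)) ∘ α` for all
`g ∈ Q`: for every `g = [[p,0,s],[0,R,0],[0,0,q]] ∈ Q` and trace-free `A`,
`α(g A g⁻¹) = i(g) · α(A) · i(g)⁻¹`. -/
theorem alphaMap_equivariant (n : ℕ) (p s q : ℝ) (R : Matrix (Fin n) (Fin n) ℝ)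
    (hp : p ≠ 0) (hq : q ≠ 0) (hR : IsUnit R.det) (hdet : |p * q * R.det| = 1)
    (A : Matrix (Idx n) (Idx n) ℝ) (hA : A.trace = 0) :
    alphaMap (qMat p s q R * A * (qMat p s q R)⁻¹) =
      iMap p s q R * alphaMap A * (iMap p s q R)⁻¹ := by
  have hRW : R * R⁻¹ = 1 := Matrix.mul_nonsing_inv R hR
  have hWR : R⁻¹ * R = 1 := Matrix.nonsing_inv_mul R hR
  have hr : Real.sqrt |q / p| ≠ 0 :=
    (Real.sqrt_pos.2 (abs_pos.2 (div_ne_zero hq hp))).ne'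
  have hg : (qMat p s q R)⁻¹ = qMat p⁻¹ (-s / (p * q)) q⁻¹ R⁻¹ := by
    apply Matrix.inv_eq_right_inv
    rw [qMat_mul, ← qMat_one, hRW]
    congr 1 <;> field_simp
    ring
  have hi : (iMap p s q R)⁻¹ = (Real.sqrt |q / p|)⁻¹ •
      kMat (q / p) (-s / p) 1 (q • R⁻¹) (p⁻¹ • R.transpose) := by
    apply Matrix.inv_eq_right_inv
    rw [iMap_eq R hp hq, Matrix.smul_mul, Matrix.mul_smul, smul_smul, mul_inv_cancel₀ hr,
      one_smul, kMat_mul, ← kMat_one]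
    congr 1
    · field_simp
    · field_simp
      ring
    · norm_num
    · rw [Matrix.smul_mul, Matrix.mul_smul, smul_smul, inv_mul_cancel₀ hq, one_smul, hRW]
    · rw [Matrix.smul_mul, Matrix.mul_smul, smul_smul, mul_inv_cancel₀ hp, one_smul,
        ← Matrix.transpose_mul, hRW, Matrix.transpose_one]
  rw [hg, hi, iMap_eq R hp hq, Matrix.smul_mul, Matrix.smul_mul, Matrix.mul_smul, smul_smul,
    mul_inv_cancel₀ hr, one_smul]
  exact alpha_conj R R⁻¹ hp hq hRW A
end
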